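/- General continuum convergence. Let (hf, hg) ∈ 𝒳², let m = min over [0,1]² of Φ(hf, hg; ·, ·), and let X_m = {(u,v) ∈ X(hf, hg) : Φ(hf, hg; u, v) = m}; then X_m is nonempty, closed, and componentwise ordered, so it has a componentwise smallest element (u′, v′) and a componentwise largest element (u″, v″). Let ω be a regular averaging kernel and let f⁰ ∈ Ψ satisfy f⁰(−∞) ≤ v″ and f⁰(+∞) ≥ v′. Then in the continuum spatially coupled recursion, for every x ∈ ℝ: liminf_{t→∞} f^t(x) ≥ v′, liminf_{t→∞} g^t(x) ≥ u′, limsup_{t→∞} f^t(x) ≤ v″, and limsup_{t→∞} g^t(x) ≤ u″. -/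

import Mathlib

open MeasureTheory Filter Set

noncomputable section

/-- Convolution `(f ⊗ ω)(x) = ∫ y, f y · ω (x − y)`. -/
def conv (f ω : ℝ → ℝ) (x : ℝ) : ℝ := ∫ y : ℝ, f y * ω (x - y)

/-- `ω` is an averaging kernel: even, nonnegative, of bounded variation, integrating to 1. -/
def IsAveragingKernel (ω : ℝ → ℝ) : Prop :=
  (∀ x, ω (-x) = ω x) ∧ (∀ x, 0 ≤ ω x) ∧ BoundedVariationOn ω Set.univ ∧
    MeasureTheory.Integrable ω ∧ (∫ x : ℝ, ω x) = 1

/-- The essential supremum `‖ω‖∞` of a kernel, as a real number. -/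
def kerSup (ω : ℝ → ℝ) : ℝ := (eLpNorm ω ⊤ MeasureTheory.volume).toReal

/-- `ω` is regular: for some `W ∈ (0,∞]`, it vanishes outside `[−W, W]` and is
positive on `(−W, W)` (the case `W = ∞` being that `ω` is everywhere positive). -/
def IsRegularKernel (ω : ℝ → ℝ) : Prop :=
  (∀ x, 0 < ω x) ∨
    ∃ W : ℝ, 0 < W ∧ (∀ x, W < |x| → ω x = 0) ∧ (∀ x, |x| < W → 0 < ω x)

/-- Membership in `𝒳`: nondecreasing self-maps of `[0,1]`. -/
def MemX (h : ℝ → ℝ) : Prop :=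
  MonotoneOn h (Icc 0 1) ∧ MapsTo h (Icc 0 1) (Icc 0 1)

/-- Left limit `h(u−)` of `h ∈ 𝒳` at `u ∈ [0,1]`, with the convention `h(0−) = 0`. -/
def lm (h : ℝ → ℝ) (u : ℝ) : ℝ := if u ≤ 0 then 0 else sSup (h '' Ico 0 u)

/-- Right limit `h(u+)` of `h ∈ 𝒳` at `u ∈ [0,1]`, with the convention `h(1+) = 1`. -/
def rm (h : ℝ → ℝ) (u : ℝ) : ℝ := if 1 ≤ u then 1 else sInf (h '' Ioc u 1)

/-- A canonical generalized inverse of `h ∈ 𝒳` (any valid inverse has the same integrals,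
so the potential below is unambiguous). -/
def Xinv (h : ℝ → ℝ) (v : ℝ) : ℝ := sInf ({1} ∪ {u ∈ Icc (0:ℝ) 1 | v ≤ h u})

/-- The potential `Φ(hf, hg; u, v) = ∫₀ᵘ hg⁻¹ + ∫₀ᵛ hf⁻¹ − u·v`. -/
def Pot (hf hg : ℝ → ℝ) (u v : ℝ) : ℝ :=
  (∫ x in (0:ℝ)..u, Xinv hg x) + (∫ x in (0:ℝ)..v, Xinv hf x) - u * v

/-- `A(hf, hg) = Φ(hf, hg; 1, 1)`. -/
def Agap (hf hg : ℝ → ℝ) : ℝ := Pot hf hg 1 1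

/-- `(u,v)` is a crossing point of `(hf, hg)`:
`u ∈ [hg(v−), hg(v+)]` and `v ∈ [hf(u−), hf(u+)]`. -/
def IsCrossing (hf hg : ℝ → ℝ) (u v : ℝ) : Prop :=
  u ∈ Icc (0:ℝ) 1 ∧ v ∈ Icc (0:ℝ) 1 ∧
    u ∈ Icc (lm hg v) (rm hg v) ∧ v ∈ Icc (lm hf u) (rm hf u)

/-- The strictly positive gap condition: there is a nontrivial crossing point, and every
nontrivial crossing point satisfies `Φ(hf, hg; u, v) > max {0, A(hf, hg)}`. -/
def StrictPosGap (hf hg : ℝ → ℝ) : Prop :=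
  (∃ u v, IsCrossing hf hg u v ∧ ¬(u = 0 ∧ v = 0) ∧ ¬(u = 1 ∧ v = 1)) ∧
    ∀ u v, IsCrossing hf hg u v → ¬(u = 0 ∧ v = 0) → ¬(u = 1 ∧ v = 1) →
      max 0 (Agap hf hg) < Pot hf hg u v

/-- Membership in `Ψ`: nondecreasing functions `ℝ → [0,1]`. -/
def MemPsi (f : ℝ → ℝ) : Prop := Monotone f ∧ ∀ x, f x ∈ Icc (0:ℝ) 1

/-- `f` is `(a,b)`-interpolating: limits `a` at `−∞` and `b` at `+∞`. -/
def Interpolates (f : ℝ → ℝ) (a b : ℝ) : Prop :=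
  Filter.Tendsto f Filter.atBot (nhds a) ∧ Filter.Tendsto f Filter.atTop (nhds b)

/-!
A one-dimensional energy argument. If profiles `F`, `G` have limits `α`, `β` at `-∞` and `a`, `b`
at `+∞` and dominate their own update, then `G ⊗ ω` and `F ⊗ ω` are subgradients of the primitives
of `hf⁻¹` and `hg⁻¹` along `F` and `G`; integrating the increments over `ℝ` and using that `ω` is
even, the product terms telescope to `b a - β α`, so `Φ(β, α) ≤ Φ(b, a)`.

For the lower bounds, tilt the potential to `Φ(u, v) + δ (u + v)` and minimise it over a box
slightly smaller than `[0, u'] × [0, v']`. The minimiser `(b, a)` is close to `(u', v')`, and no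
other point of `[0, b] × [0, a]` has potential at most `Φ(b, a)`. Capping the recursion at `(b, a)`
and pinning it above a step of height `a` gives an increasing iteration, whose limit dominates its
own update and is therefore constant by the energy inequality. The tilt also makes the level `a` on
a half-line self-sustaining, which places a translate of the pinned iteration below the actual
recursion. The upper bounds follow by the reflection `(x, u, v) ↦ (-x, 1 - u, 1 - v)`.
-/

open scoped Topology

/-! ### Profiles -/

namespace MemPsi

variable {F k : ℝ → ℝ}

lemma norm_le_one (hF : MemPsi F) (x : ℝ) : ‖F x‖ ≤ 1 :=
  (Real.norm_of_nonneg (hF.2 x).1).trans_le (hF.2 x).2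

lemma aestronglyMeasurable (hF : MemPsi F) : AEStronglyMeasurable F :=
  hF.1.measurable.aestronglyMeasurable

lemma integrable_mul (hF : MemPsi F) (hk : Integrable k) : Integrable (fun x => F x * k x) :=
  hk.bdd_mul hF.aestronglyMeasurable (Eventually.of_forall hF.norm_le_one)

lemma const {c : ℝ} (hc : c ∈ Icc (0 : ℝ) 1) : MemPsi (fun _ => c) :=
  ⟨monotone_const, fun _ => hc⟩

lemma comp_monotone (hF : MemPsi F) {φ : ℝ → ℝ} (hφ : Monotone φ) : MemPsi (fun x => F (φ x)) :=
  ⟨hF.1.comp hφ, fun _ => hF.2 _⟩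

lemma comp_sub_const (hF : MemPsi F) (y : ℝ) : MemPsi (fun x => F (x - y)) :=
  hF.comp_monotone fun _ _ h => sub_le_sub_right h y

lemma comp_add_const (hF : MemPsi F) (y : ℝ) : MemPsi (fun x => F (x + y)) :=
  hF.comp_monotone fun _ _ h => add_le_add_left h y

lemma one_sub_comp_neg (hF : MemPsi F) : MemPsi (fun x => 1 - F (-x)) :=
  ⟨fun _ _ h => sub_le_sub_left (hF.1 (neg_le_neg h)) 1,
    fun _ => Icc.mem_iff_one_sub_mem.1 (hF.2 _)⟩

lemma limit_mem_Icc (hF : MemPsi F) {l : Filter ℝ} [l.NeBot] {a : ℝ} (h : Tendsto F l (𝓝 a)) :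
    a ∈ Icc (0 : ℝ) 1 :=
  isClosed_Icc.mem_of_tendsto h (Eventually.of_forall hF.2)

lemma exists_tendsto_atBot (hF : MemPsi F) : ∃ α, (∀ x, α ≤ F x) ∧ Tendsto F atBot (𝓝 α) :=
  have hbdd : BddBelow (range F) := ⟨0, forall_mem_range.2 fun x => (hF.2 x).1⟩
  ⟨⨅ x, F x, ciInf_le hbdd, tendsto_atBot_ciInf hF.1 hbdd⟩

end MemPsi

lemma exists_limit_of_monotone_memPsi {A : ℕ → ℝ → ℝ} (hA : ∀ n, MemPsi (A n))
    (hmono : Monotone A) :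
    ∃ F, MemPsi F ∧ (∀ n x, A n x ≤ F x) ∧ ∀ x, Tendsto (fun n => A n x) atTop (𝓝 (F x)) := by
  have hbdd : ∀ x, BddAbove (range fun n => A n x) := fun x =>
    ⟨1, forall_mem_range.2 fun n => ((hA n).2 x).2⟩
  have hlim : ∀ x, Tendsto (fun n => A n x) atTop (𝓝 (⨆ n, A n x)) := fun x =>
    tendsto_atTop_ciSup (fun _ _ h => hmono h x) (hbdd x)
  refine ⟨fun x => ⨆ n, A n x, ⟨fun x y hxy => ciSup_mono (hbdd y) fun n => (hA n).1 hxy,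
    fun x => ?_⟩, fun n x => le_ciSup (hbdd x) n, hlim⟩
  exact isClosed_Icc.mem_of_tendsto (hlim x) (Eventually.of_forall fun n => (hA n).2 x)

/-- The step profile, equal to `0` on the negative axis and to `c` on `[0, ∞)`. -/
def stepProfile (c : ℝ) : ℝ → ℝ := (Ici 0).indicator fun _ => c

lemma stepProfile_of_nonneg (c : ℝ) {x : ℝ} (hx : 0 ≤ x) : stepProfile c x = c :=
  indicator_of_mem (mem_Ici.2 hx) _

lemma memPsi_stepProfile {c : ℝ} (hc : c ∈ Icc (0 : ℝ) 1) : MemPsi (stepProfile c) := by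
  refine ⟨fun x y hxy => ?_, fun x => ?_⟩
  · rcases le_or_gt 0 x with hx | hx
    · rw [stepProfile_of_nonneg c hx, stepProfile_of_nonneg c (hx.trans hxy)]
    · rw [stepProfile, indicator_of_notMem (notMem_Ici.2 hx)]
      exact indicator_nonneg (fun _ _ => hc.1) y
  · exact ⟨indicator_nonneg (fun _ _ => hc.1) x, indicator_le' (fun _ _ => hc.2)
      (fun _ _ => zero_le_one) x⟩

lemma stepProfile_le {c : ℝ} (hc : 0 ≤ c) (x : ℝ) : stepProfile c x ≤ c :=
  indicator_le_self' (fun _ _ => hc) x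

lemma stepProfile_comp_sub_le {F : ℝ → ℝ} (hF : MemPsi F) {c y : ℝ} (h : ∀ x, y ≤ x → c ≤ F x)
    (x : ℝ) : stepProfile c (x - y) ≤ F x :=
  indicator_apply_le' (fun hx => h x (sub_nonneg.1 hx)) fun _ => (hF.2 x).1

lemma tendsto_stepProfile_atTop (c : ℝ) : Tendsto (stepProfile c) atTop (𝓝 c) :=
  tendsto_const_nhds.congr' <| (eventually_ge_atTop 0).mono fun _ hx =>
    (stepProfile_of_nonneg c hx).symm

/-! ### Convolution with an even density -/

/-- The even probability densities on `ℝ`; averaging kernels are those of bounded variation. -/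
structure IsEvenDensity (ω : ℝ → ℝ) : Prop where
  even : ∀ x, ω (-x) = ω x
  nonneg : ∀ x, 0 ≤ ω x
  integrable : Integrable ω
  integral_eq_one : ∫ x, ω x = 1

lemma IsAveragingKernel.isEvenDensity {ω : ℝ → ℝ} (hω : IsAveragingKernel ω) : IsEvenDensity ω :=
  ⟨hω.1, hω.2.1, hω.2.2.2.1, hω.2.2.2.2⟩

lemma conv_eq_integral_comp_sub (F ω : ℝ → ℝ) (x : ℝ) : conv F ω x = ∫ z, F (x - z) * ω z := by
  simpa only [sub_sub_cancel, conv] using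
    (integral_sub_left_eq_self (fun y => F y * ω (x - y)) volume x).symm

lemma conv_comp_sub_const (F ω : ℝ → ℝ) (y x : ℝ) :
    conv (fun z => F (z - y)) ω x = conv F ω (x - y) := by
  simp only [conv_eq_integral_comp_sub, sub_right_comm]

lemma conv_comp_add_const (F ω : ℝ → ℝ) (y x : ℝ) :
    conv (fun z => F (z + y)) ω x = conv F ω (x + y) := by
  simpa only [sub_neg_eq_add] using conv_comp_sub_const F ω (-y) x

lemma tendsto_integral_norm_comp_add_sub {E : Type*} [NormedAddCommGroup E] {f : ℝ → E}
    (hf : Integrable f) : Tendsto (fun s => ∫ x, ‖f (x + s) - f x‖) (𝓝 0) (𝓝 0) := by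
  let shift : C(ℝ, C(ℝ, ℝ)) := (ContinuousMap.mk (fun p : ℝ × ℝ => p.2 + p.1)).curry
  have hshift : ∀ s, MeasurePreserving (shift s) volume volume := fun s =>
    measurePreserving_add_right volume s
  have hcoe : ∀ s, Lp.compMeasurePreserving (shift s) (hshift s) (hf.toL1 f)
      =ᵐ[volume] fun x => f (x + s) := fun s =>
    (Lp.coeFn_compMeasurePreserving _ (hshift s)).trans
      ((hshift s).quasiMeasurePreserving.ae_eq_comp hf.coeFn_toL1)
  have hlim := tendsto_iff_dist_tendsto_zero.1 <|
    (tendsto_const_nhds (x := hf.toL1 f)).compMeasurePreservingLp (shift.continuous.tendsto 0)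
      hshift (hshift 0) ENNReal.one_ne_top
  refine hlim.congr fun s => ?_
  rw [L1.dist_eq_integral_dist]
  refine integral_congr_ae ?_
  filter_upwards [hcoe s, hcoe 0] with x hs h0
  rw [hs, h0, dist_eq_norm, add_zero]

namespace IsEvenDensity

variable {ω F G : ℝ → ℝ}

lemma integrable_conv (hω : IsEvenDensity ω) (hF : MemPsi F) (x : ℝ) :
    Integrable (fun y => F y * ω (x - y)) :=
  hF.integrable_mul (hω.integrable.comp_sub_left x)

lemma conv_le_conv (hω : IsEvenDensity ω) (hF : MemPsi F) (hG : MemPsi G) (h : F ≤ G) :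
    conv F ω ≤ conv G ω := fun x =>
  integral_mono (hω.integrable_conv hF x) (hω.integrable_conv hG x) fun y =>
    mul_le_mul_of_nonneg_right (h y) (hω.nonneg _)

lemma conv_const (hω : IsEvenDensity ω) (c x : ℝ) : conv (fun _ => c) ω x = c := by
  rw [conv_eq_integral_comp_sub, integral_const_mul, hω.integral_eq_one, mul_one]

lemma memPsi_conv (hω : IsEvenDensity ω) (hF : MemPsi F) : MemPsi (conv F ω) := by
  refine ⟨fun x y hxy => ?_, fun x => ⟨?_, ?_⟩⟩
  · have h := hω.conv_le_conv hF (hF.comp_add_const (y - x))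
      (fun z => hF.1 (le_add_of_nonneg_right (sub_nonneg.2 hxy))) x
    rwa [conv_comp_add_const, add_sub_cancel] at h
  · simpa only [hω.conv_const] using
      hω.conv_le_conv (.const (left_mem_Icc.2 zero_le_one)) hF (fun y => (hF.2 y).1) x
  · simpa only [hω.conv_const] using
      hω.conv_le_conv hF (.const (right_mem_Icc.2 zero_le_one)) (fun y => (hF.2 y).2) x

lemma tendsto_conv_along (hω : IsEvenDensity ω) {ι : Type*} {l : Filter ι}
    [l.IsCountablyGenerated] {F : ι → ℝ → ℝ} (hF : ∀ i, MemPsi (F i)) {x : ι → ℝ} {L : ℝ → ℝ}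
    (hL : ∀ z, Tendsto (fun i => F i (x i - z)) l (𝓝 (L z))) :
    Tendsto (fun i => conv (F i) ω (x i)) l (𝓝 (∫ z, L z * ω z)) := by
  simp only [conv_eq_integral_comp_sub]
  refine tendsto_integral_filter_of_dominated_convergence ω
    (Eventually.of_forall fun i => ?_) (Eventually.of_forall fun i => ae_of_all _ fun z => ?_)
    hω.integrable (ae_of_all _ fun z => (hL z).mul_const _)
  · simpa only [sub_sub_cancel] using
      ((hω.integrable_conv (hF i) (x i)).comp_sub_left (x i)).aestronglyMeasurable
  · rw [norm_mul, Real.norm_of_nonneg (hω.nonneg z)]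
    exact mul_le_of_le_one_left (hω.nonneg z) ((hF i).norm_le_one _)

lemma tendsto_conv_of_forall_tendsto (hω : IsEvenDensity ω) {A : ℕ → ℝ → ℝ}
    (hA : ∀ n, MemPsi (A n)) (h : ∀ x, Tendsto (fun n => A n x) atTop (𝓝 (F x))) (x : ℝ) :
    Tendsto (fun n => conv (A n) ω x) atTop (𝓝 (conv F ω x)) := by
  rw [conv_eq_integral_comp_sub F]
  exact hω.tendsto_conv_along hA fun z => h (x - z)

lemma tendsto_conv_of_tendsto (hω : IsEvenDensity ω) (hF : MemPsi F) {l : Filter ℝ}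
    [l.IsCountablyGenerated] (hl : ∀ z, Tendsto (· + z) l l) {a : ℝ} (h : Tendsto F l (𝓝 a)) :
    Tendsto (conv F ω) l (𝓝 a) := by
  have hlim := hω.tendsto_conv_along (fun _ => hF) (x := id) fun z => h.comp (hl (-z))
  rwa [integral_const_mul, hω.integral_eq_one, mul_one] at hlim

lemma tendsto_conv_atTop (hω : IsEvenDensity ω) (hF : MemPsi F) {a : ℝ}
    (h : Tendsto F atTop (𝓝 a)) : Tendsto (conv F ω) atTop (𝓝 a) :=
  hω.tendsto_conv_of_tendsto hF (fun z => tendsto_atTop_add_const_right _ z tendsto_id) h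

lemma tendsto_conv_atBot (hω : IsEvenDensity ω) (hF : MemPsi F) {a : ℝ}
    (h : Tendsto F atBot (𝓝 a)) : Tendsto (conv F ω) atBot (𝓝 a) :=
  hω.tendsto_conv_of_tendsto hF (fun z => tendsto_atBot_add_const_right _ z tendsto_id) h

lemma conv_one_sub_comp_neg (hω : IsEvenDensity ω) (hF : MemPsi F) (x : ℝ) :
    conv (fun y => 1 - F (-y)) ω x = 1 - conv F ω (-x) := by
  have hflip : ∀ y, F (-y) * ω (-x - -y) = F (-y) * ω (x - y) := fun y => by
    rw [← hω.even (x - y), neg_sub, sub_neg_eq_add, neg_add_eq_sub]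
  have hint := (hω.integrable_conv hF (-x)).comp_neg
  have hreflect : conv F ω (-x) = ∫ y, F (-y) * ω (-x - -y) :=
    (integral_neg_eq_self (fun y => F y * ω (-x - y)) volume).symm
  simp only [hflip] at hint hreflect
  have hone := hω.conv_const 1 x
  rw [hreflect]
  simp only [conv, sub_mul] at hone ⊢
  rw [integral_sub ((hω.integrable.comp_sub_left x).const_mul 1) hint, hone]

lemma conv_comp_add_sub (hω : IsEvenDensity ω) (hF : MemPsi F) (s x : ℝ) :
    conv (fun y => F (y + s) - F y) ω x = conv F ω (x + s) - conv F ω x := by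
  rw [← conv_comp_add_const]
  simp only [conv, sub_mul]
  exact integral_sub (hω.integrable_conv (hF.comp_add_const s) x) (hω.integrable_conv hF x)

lemma integral_conv_mul (hω : IsEvenDensity ω) (hG : MemPsi G) {D : ℝ → ℝ} (hD : Integrable D) :
    ∫ x, conv G ω x * D x = ∫ y, G y * conv D ω y := by
  have hint : Integrable (fun p : ℝ × ℝ => G p.1 * (D p.2 * ω (p.1 - p.2)))
      (volume.prod volume) :=
    (hD.convolution_integrand (ContinuousLinearMap.mul ℝ ℝ) hω.integrable).bdd_mul
      (hG.1.measurable.comp measurable_fst).aestronglyMeasurable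
      (Eventually.of_forall fun p => hG.norm_le_one p.1)
  have hcomm : ∀ x y, ω (x - y) = ω (y - x) := fun x y => by rw [← hω.even, neg_sub]
  calc ∫ x, conv G ω x * D x
      = ∫ x, ∫ y, G y * (D x * ω (y - x)) := by
        simp only [conv, ← integral_mul_const, hcomm, mul_assoc, mul_comm (D _)]
    _ = ∫ y, ∫ x, G y * (D x * ω (y - x)) := (integral_integral_swap hint).symm
    _ = ∫ y, G y * conv D ω y := by simp only [integral_const_mul, conv]

lemma exists_pos_forall_conv_add_sub_le (hω : IsEvenDensity ω) {ε : ℝ} (hε : 0 < ε) :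
    ∃ s, 0 < s ∧ ∀ F, MemPsi F → ∀ x, conv F ω (x + s) - conv F ω x ≤ ε := by
  have hsmall : ∀ᶠ s in 𝓝[>] (0 : ℝ), ∫ z, ‖ω (z + s) - ω z‖ < ε :=
    ((tendsto_integral_norm_comp_add_sub hω.integrable).eventually_lt_const hε).filter_mono
      nhdsWithin_le_nhds
  obtain ⟨s, hs, hs0⟩ := (hsmall.and self_mem_nhdsWithin).exists
  refine ⟨s, hs0, fun F hF x => le_trans ?_ hs.le⟩
  have hdiff : Integrable (fun z => ω (z + s) - ω z) :=
    (hω.integrable.comp_add_right s).sub hω.integrable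
  calc conv F ω (x + s) - conv F ω x
      = ∫ y, F y * (ω (x - y + s) - ω (x - y)) := by
        simp only [conv, mul_sub]
        rw [← integral_sub (hω.integrable_conv hF _) (hω.integrable_conv hF _)]
        simp only [sub_add_eq_add_sub]
    _ ≤ ∫ y, ‖ω (x - y + s) - ω (x - y)‖ := by
        refine integral_mono (hF.integrable_mul (hdiff.comp_sub_left x))
          (hdiff.comp_sub_left x).norm fun y => ?_
        refine (le_abs_self _).trans ?_
        rw [abs_mul]
        exact mul_le_of_le_one_left (abs_nonneg _) (hF.norm_le_one y)
    _ = ∫ z, ‖ω (z + s) - ω z‖ :=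
        integral_sub_left_eq_self (fun z => ‖ω (z + s) - ω z‖) volume x

lemma exists_pos_forall_sub_le_conv (hω : IsEvenDensity ω) {ε : ℝ} (hε : 0 < ε) :
    ∃ s, 0 < s ∧ ∀ F, MemPsi F → ∀ c ≤ 1, ∀ y, (∀ x, y ≤ x → c ≤ F x) →
      ∀ x, y + s ≤ x → c - ε ≤ conv F ω x := by
  have hone : (1 : ℝ) ∈ Icc (0 : ℝ) 1 := right_mem_Icc.2 zero_le_one
  have hlim := hω.tendsto_conv_atTop (memPsi_stepProfile hone) (tendsto_stepProfile_atTop 1)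
  obtain ⟨s, hs, hs0⟩ := ((hlim.eventually_const_lt (sub_lt_self 1 hε)).and
    (eventually_gt_atTop 0)).exists
  refine ⟨s, hs0, fun F hF c hc y hy x hx => ?_⟩
  rcases lt_or_ge c 0 with hneg | hc0
  · linarith [((hω.memPsi_conv hF).2 x).1]
  have hstep := memPsi_stepProfile ⟨hc0, hc⟩
  have hscale : conv (stepProfile c) ω s = c * conv (stepProfile 1) ω s := by
    simp only [conv, ← integral_const_mul, ← mul_assoc, stepProfile, indicator_apply, mul_ite,
      mul_one, mul_zero]
  calc c - ε ≤ c * (1 - ε) := by nlinarith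
    _ ≤ c * conv (stepProfile 1) ω s := mul_le_mul_of_nonneg_left hs.le hc0
    _ = conv (stepProfile c) ω s := hscale.symm
    _ ≤ conv (stepProfile c) ω (x - y) := (hω.memPsi_conv hstep).1 (by linarith)
    _ = conv (fun z => stepProfile c (z - y)) ω x := (conv_comp_sub_const _ _ _ _).symm
    _ ≤ conv F ω x :=
        hω.conv_le_conv (hstep.comp_sub_const y) hF (stepProfile_comp_sub_le hF hy) x

end IsEvenDensity

/-! ### Increments of monotone functions -/

lemma tendsto_integral_window_of_monotone {F : ℝ → ℝ} (hF : Monotone F) {s c : ℝ} (hs : 0 ≤ s)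
    {l : Filter ℝ} (hl : Tendsto (· + s) l l) (h : Tendsto F l (𝓝 c)) :
    Tendsto (fun R => ∫ x in R..R + s, F x) l (𝓝 (s * c)) := by
  have hle : ∀ R, R ≤ R + s := fun R => le_add_of_nonneg_right hs
  have hint : ∀ R, IntervalIntegrable F volume R (R + s) := fun R => hF.intervalIntegrable
  have hconst : ∀ R k, ∫ _ in R..R + s, k = s * k := fun R k => by
    rw [intervalIntegral.integral_const, add_sub_cancel_left, smul_eq_mul]
  refine tendsto_of_tendsto_of_tendsto_of_le_of_le (h.const_mul s) ((h.comp hl).const_mul s)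
    (fun R => ?_) fun R => ?_
  · exact (hconst R (F R)).ge.trans <| intervalIntegral.integral_mono_on (hle R)
      intervalIntegrable_const (hint R) fun x hx => hF hx.1
  · exact le_trans (intervalIntegral.integral_mono_on (hle R) (hint R)
      intervalIntegrable_const fun x hx => hF hx.2) (hconst R (F (R + s))).le

section Increments

variable {F : ℝ → ℝ} {l L s : ℝ}

lemma tendsto_intervalIntegral_comp_add_sub (hF : Monotone F) (hbot : Tendsto F atBot (𝓝 l))
    (htop : Tendsto F atTop (𝓝 L)) (hs : 0 ≤ s) :
    Tendsto (fun R => ∫ x in -R..R, (F (x + s) - F x)) atTop (𝓝 (s * (L - l))) := by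
  have hii : ∀ p q, IntervalIntegrable F volume p q := fun _ _ => hF.intervalIntegrable
  have htelescope : ∀ R, ∫ x in -R..R, (F (x + s) - F x)
      = (∫ x in R..R + s, F x) - ∫ x in -R..-R + s, F x := fun R => by
    have hshift : IntervalIntegrable (fun x => F (x + s)) volume (-R) R :=
      (hF.comp fun _ _ h => add_le_add_left h s).intervalIntegrable
    rw [intervalIntegral.integral_sub hshift (hii _ _),
      intervalIntegral.integral_comp_add_right]
    linarith [intervalIntegral.integral_add_adjacent_intervals (hii (-R) R) (hii R (R + s)),
      intervalIntegral.integral_add_adjacent_intervals (hii (-R) (-R + s)) (hii _ (R + s))]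
  simp only [htelescope, mul_sub]
  exact (tendsto_integral_window_of_monotone hF hs
      (tendsto_atTop_add_const_right _ s tendsto_id) htop).sub
    ((tendsto_integral_window_of_monotone hF hs
      (tendsto_atBot_add_const_right _ s tendsto_id) hbot).comp tendsto_neg_atTop_atBot)

lemma integrable_comp_add_sub_of_monotone (hF : Monotone F) (hbot : Tendsto F atBot (𝓝 l))
    (htop : Tendsto F atTop (𝓝 L)) (hs : 0 ≤ s) : Integrable (fun x => F (x + s) - F x) := by
  have hnonneg : ∀ x, 0 ≤ F (x + s) - F x := fun x =>
    sub_nonneg.2 (hF (le_add_of_nonneg_right hs))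
  refine integrable_of_intervalIntegral_norm_tendsto (s * (L - l)) (fun R => ?_)
    tendsto_neg_atTop_atBot tendsto_id ?_
  · exact (((hF.comp fun _ _ h => add_le_add_left h s).intervalIntegrable).sub
      hF.intervalIntegrable).1
  · simpa only [Real.norm_of_nonneg (hnonneg _), id] using
      tendsto_intervalIntegral_comp_add_sub hF hbot htop hs

lemma integral_comp_add_sub_of_monotone (hF : Monotone F) (hbot : Tendsto F atBot (𝓝 l))
    (htop : Tendsto F atTop (𝓝 L)) (hs : 0 ≤ s) : ∫ x, (F (x + s) - F x) = s * (L - l) :=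
  tendsto_nhds_unique
    (intervalIntegral_tendsto_integral (integrable_comp_add_sub_of_monotone hF hbot htop hs)
      tendsto_neg_atTop_atBot tendsto_id)
    (tendsto_intervalIntegral_comp_add_sub hF hbot htop hs)

end Increments

/-! ### Potentials -/

lemma bddBelow_Xinv_set (h : ℝ → ℝ) (v : ℝ) :
    BddBelow ({1} ∪ {u ∈ Icc (0 : ℝ) 1 | v ≤ h u}) :=
  bddBelow_singleton.union (bddBelow_Icc.mono fun _ hu => hu.1)

lemma Xinv_le_one (h : ℝ → ℝ) (v : ℝ) : Xinv h v ≤ 1 :=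
  csInf_le (bddBelow_Xinv_set h v) (Or.inl rfl)

lemma Xinv_le {h : ℝ → ℝ} {q v : ℝ} (hq : q ∈ Icc (0 : ℝ) 1) (hv : v ≤ h q) : Xinv h v ≤ q :=
  csInf_le (bddBelow_Xinv_set h v) (Or.inr ⟨hq, hv⟩)

lemma Xinv_nonneg (h : ℝ → ℝ) (v : ℝ) : 0 ≤ Xinv h v :=
  le_csInf ⟨1, Or.inl rfl⟩ fun _ hu => hu.elim (fun h1 => h1 ▸ zero_le_one) fun h1 => h1.1.1

lemma le_Xinv {h : ℝ → ℝ} (hh : MemX h) {q v : ℝ} (hq : q ∈ Icc (0 : ℝ) 1) (hv : h q < v) :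
    q ≤ Xinv h v := by
  refine le_csInf ⟨1, Or.inl rfl⟩ ?_
  rintro u (rfl | ⟨hu, hvu⟩)
  · exact hq.2
  · exact le_of_not_gt fun huq => (hvu.trans (hh.1 hu hq huq.le)).not_gt hv

lemma monotone_Xinv (h : ℝ → ℝ) : Monotone (Xinv h) := fun v _ hvw =>
  csInf_le_csInf (bddBelow_Xinv_set h v) ⟨1, Or.inl rfl⟩
    (union_subset_union_right _ fun _ hu => ⟨hu.1, hvw.trans hu.2⟩)

/-- `H` behaves on `[0, 1]` like a primitive of a generalized inverse of `h`: its difference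
quotients lie in `[0, 1]`, are at least `q` above the level `h q`, and at most `q` below it.
Unlike `Xinv`, this description is invariant under the reflection `x ↦ 1 - x`. -/
structure IsInversePrimitive (h H : ℝ → ℝ) : Prop where
  monotoneOn : MonotoneOn H (Icc 0 1)
  sub_le_sub : ∀ {v w}, 0 ≤ v → v ≤ w → w ≤ 1 → H w - H v ≤ w - v
  mul_le_sub : ∀ {q v w}, q ∈ Icc (0 : ℝ) 1 → 0 ≤ v → v ≤ w → w ≤ 1 → h q ≤ v →
    q * (w - v) ≤ H w - H v
  sub_le_mul : ∀ {q v w}, q ∈ Icc (0 : ℝ) 1 → 0 ≤ v → v ≤ w → w ≤ 1 → w ≤ h q →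
    H w - H v ≤ q * (w - v)

/-- The primitive `v ↦ ∫₀ᵛ h⁻¹` of the generalized inverse of `h`. -/
def inversePrimitive (h : ℝ → ℝ) (v : ℝ) : ℝ := ∫ x in (0 : ℝ)..v, Xinv h x

/-- The reflection `q ↦ 1 - h (1 - q)` of a self-map of `[0, 1]`, exchanging the roles of the
smallest and the largest minimisers of the potential. -/
def reflect (h : ℝ → ℝ) (q : ℝ) : ℝ := 1 - h (1 - q)

/-- The primitive of the generalized inverse of `reflect h` obtained from a primitive `H` of the
generalized inverse of `h`. -/
def reflectPrimitive (H : ℝ → ℝ) (v : ℝ) : ℝ := H (1 - v) + v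

lemma MemX.reflect {h : ℝ → ℝ} (hh : MemX h) : MemX (reflect h) :=
  ⟨fun _ hp _ hq hpq => sub_le_sub_left (hh.1 (Icc.mem_iff_one_sub_mem.1 hq)
      (Icc.mem_iff_one_sub_mem.1 hp) (sub_le_sub_left hpq 1)) 1,
    fun _ hq => Icc.mem_iff_one_sub_mem.1 (hh.2 (Icc.mem_iff_one_sub_mem.1 hq))⟩

namespace IsInversePrimitive

variable {h H : ℝ → ℝ}

lemma continuousOn (hH : IsInversePrimitive h H) : ContinuousOn H (Icc 0 1) := by
  suffices LipschitzOnWith 1 H (Icc 0 1) from this.continuousOn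
  refine LipschitzOnWith.of_le_add fun x hx y hy => ?_
  rcases le_total x y with hxy | hxy
  · exact (hH.monotoneOn hx hy hxy).trans (le_add_of_nonneg_right dist_nonneg)
  · linarith [hH.sub_le_sub hy.1 hxy hx.2, le_abs_self (x - y), Real.dist_eq x y]

lemma reflect (hH : IsInversePrimitive h H) :
    IsInversePrimitive (reflect h) (reflectPrimitive H) where
  monotoneOn v hv w hw hvw := by
    unfold reflectPrimitive
    linarith [hH.sub_le_sub (sub_nonneg.2 hw.2) (sub_le_sub_left hvw 1) (sub_le_self 1 hv.1)]
  sub_le_sub hv hvw hw := by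
    unfold reflectPrimitive
    linarith [hH.monotoneOn ⟨sub_nonneg.2 hw, sub_le_self 1 (hv.trans hvw)⟩
      ⟨sub_nonneg.2 (hvw.trans hw), sub_le_self 1 hv⟩ (sub_le_sub_left hvw 1)]
  mul_le_sub hq hv hvw hw hqv := by
    unfold reflectPrimitive
    linarith [hH.sub_le_mul (Icc.mem_iff_one_sub_mem.1 hq) (sub_nonneg.2 hw)
      (sub_le_sub_left hvw 1) (sub_le_self 1 hv) (sub_le_comm.1 hqv)]
  sub_le_mul hq hv hvw hw hwq := by
    unfold reflectPrimitive
    linarith [hH.mul_le_sub (Icc.mem_iff_one_sub_mem.1 hq) (sub_nonneg.2 hw)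
      (sub_le_sub_left hvw 1) (sub_le_self 1 hv) (le_sub_comm.1 hwq)]

-- The minimality of `u` says that `v` is a subgradient of `H` at `u`.
lemma mem_Icc_lm_rm (hH : IsInversePrimitive h H) (hh : MemX h) {u v : ℝ}
    (hu : u ∈ Icc (0 : ℝ) 1) (hv : v ∈ Icc (0 : ℝ) 1)
    (hmin : ∀ p ∈ Icc (0 : ℝ) 1, H u - u * v ≤ H p - p * v) : u ∈ Icc (lm h v) (rm h v) := by
  constructor
  · unfold lm
    split_ifs with hv0
    · exact hu.1
    refine csSup_le ⟨h 0, mem_image_of_mem h ⟨le_rfl, not_le.1 hv0⟩⟩ ?_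
    rintro _ ⟨w, hw, rfl⟩
    by_contra! hlt
    have hw1 : w ∈ Icc (0 : ℝ) 1 := ⟨hw.1, hw.2.le.trans hv.2⟩
    have hslope := hH.sub_le_mul hw1 hu.1 hlt.le (hh.2 hw1).2 le_rfl
    nlinarith [hw.2, hmin (h w) (hh.2 hw1)]
  · unfold rm
    split_ifs with hv1
    · exact hu.2
    refine le_csInf ⟨h 1, mem_image_of_mem h ⟨not_le.1 hv1, le_rfl⟩⟩ ?_
    rintro _ ⟨w, hw, rfl⟩
    by_contra! hlt
    have hw1 : w ∈ Icc (0 : ℝ) 1 := ⟨hv.1.trans hw.1.le, hw.2⟩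
    have hslope := hH.mul_le_sub hw1 (hh.2 hw1).1 hlt.le hu.2 le_rfl
    nlinarith [hw.1, hmin (h w) (hh.2 hw1)]

end IsInversePrimitive

lemma inversePrimitive_sub (h : ℝ → ℝ) (v w : ℝ) :
    inversePrimitive h w - inversePrimitive h v = ∫ x in v..w, Xinv h x :=
  intervalIntegral.integral_interval_sub_left (monotone_Xinv h).intervalIntegrable
    (monotone_Xinv h).intervalIntegrable

lemma mul_sub_le_inversePrimitive_sub {h : ℝ → ℝ} {c v w : ℝ} (hvw : v ≤ w)
    (hc : ∀ x ∈ Ioo v w, c ≤ Xinv h x) :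
    c * (w - v) ≤ inversePrimitive h w - inversePrimitive h v := by
  rw [inversePrimitive_sub, mul_comm, ← smul_eq_mul, ← intervalIntegral.integral_const]
  exact intervalIntegral.integral_mono_on_of_le_Ioo hvw intervalIntegrable_const
    (monotone_Xinv h).intervalIntegrable hc

lemma inversePrimitive_sub_le_mul_sub {h : ℝ → ℝ} {c v w : ℝ} (hvw : v ≤ w)
    (hc : ∀ x ∈ Ioo v w, Xinv h x ≤ c) :
    inversePrimitive h w - inversePrimitive h v ≤ c * (w - v) := by
  rw [inversePrimitive_sub, mul_comm, ← smul_eq_mul, ← intervalIntegral.integral_const]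
  exact intervalIntegral.integral_mono_on_of_le_Ioo hvw (monotone_Xinv h).intervalIntegrable
    intervalIntegrable_const hc

lemma MemX.isInversePrimitive {h : ℝ → ℝ} (hh : MemX h) :
    IsInversePrimitive h (inversePrimitive h) where
  monotoneOn v _ w _ hvw := sub_nonneg.1 <| (zero_mul (w - v)).ge.trans
    (mul_sub_le_inversePrimitive_sub hvw fun x _ => Xinv_nonneg h x)
  sub_le_sub _ hvw _ :=
    (inversePrimitive_sub_le_mul_sub hvw fun x _ => Xinv_le_one h x).trans (one_mul _).le
  mul_le_sub hq _ hvw _ hqv :=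
    mul_sub_le_inversePrimitive_sub hvw fun _ hx => le_Xinv hh hq (hqv.trans_lt hx.1)
  sub_le_mul hq _ hvw _ hwq :=
    inversePrimitive_sub_le_mul_sub hvw fun _ hx => Xinv_le hq (hx.2.le.trans hwq)

/-- The potential `Φ(u, v) = Hg u + Hf v - u v`; `Pot hf hg` is the case in which `Hf` and `Hg` are
`inversePrimitive hf` and `inversePrimitive hg`. -/
def coupledPotential (Hf Hg : ℝ → ℝ) (u v : ℝ) : ℝ := Hg u + Hf v - u * v

lemma coupledPotential_swap (Hf Hg : ℝ → ℝ) (u v : ℝ) :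
    coupledPotential Hf Hg u v = coupledPotential Hg Hf v u := by
  unfold coupledPotential; ring

lemma coupledPotential_reflect (Hf Hg : ℝ → ℝ) (u v : ℝ) :
    coupledPotential (reflectPrimitive Hf) (reflectPrimitive Hg) u v
      = coupledPotential Hf Hg (1 - u) (1 - v) + 1 := by
  unfold coupledPotential reflectPrimitive; ring

lemma continuousOn_coupledPotential {Hf Hg : ℝ → ℝ} (hf : ContinuousOn Hf (Icc 0 1))
    (hg : ContinuousOn Hg (Icc 0 1)) :
    ContinuousOn (fun p : ℝ × ℝ => coupledPotential Hf Hg p.1 p.2) (Icc 0 1 ×ˢ Icc 0 1) :=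
  ((hg.comp continuousOn_fst fun _ hp => hp.1).add
    (hf.comp continuousOn_snd fun _ hp => hp.2)).sub (continuousOn_fst.mul continuousOn_snd)

lemma isCrossing_of_Pot_le_isLeast {hf hg : ℝ → ℝ} (hhf : MemX hf) (hhg : MemX hg) {m u v : ℝ}
    (hm : IsLeast ((fun p : ℝ × ℝ => Pot hf hg p.1 p.2) '' (Icc 0 1 ×ˢ Icc 0 1)) m)
    (hu : u ∈ Icc (0 : ℝ) 1) (hv : v ∈ Icc (0 : ℝ) 1) (hle : Pot hf hg u v ≤ m) :
    IsCrossing hf hg u v ∧ Pot hf hg u v = m := by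
  have hmin : ∀ p ∈ Icc (0 : ℝ) 1, ∀ q ∈ Icc (0 : ℝ) 1, m ≤ Pot hf hg p q := fun p hp q hq =>
    hm.2 ⟨(p, q), ⟨hp, hq⟩, rfl⟩
  refine ⟨⟨hu, hv, ?_, ?_⟩, le_antisymm hle (hmin u hu v hv)⟩
  · refine hhg.isInversePrimitive.mem_Icc_lm_rm hhg hu hv fun p hp => ?_
    have := hle.trans (hmin p hp v hv)
    unfold Pot at this
    unfold inversePrimitive
    linarith
  · refine hhf.isInversePrimitive.mem_Icc_lm_rm hhf hv hu fun q hq => ?_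
    have := hle.trans (hmin u hu q hq)
    unfold Pot at this
    unfold inversePrimitive
    linarith

/-! ### The energy inequality -/

lemma MemPsi.interpolates_comp_of_continuousOn {F H : ℝ → ℝ} (hF : MemPsi F)
    (hH : ContinuousOn H (Icc 0 1)) {α a : ℝ} (hFα : Interpolates F α a) :
    Interpolates (fun x => H (F x)) (H α) (H a) := by
  have hlim : ∀ {l : Filter ℝ} [l.NeBot] {c}, Tendsto F l (𝓝 c) →
      Tendsto (fun x => H (F x)) l (𝓝 (H c)) := fun hc =>
    (hH _ (hF.limit_mem_Icc hc)).tendsto.comp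
      (tendsto_nhdsWithin_iff.2 ⟨hc, Eventually.of_forall hF.2⟩)
  exact ⟨hlim hFα.1, hlim hFα.2⟩

section Energy

variable {ω F G Q H Hf Hg : ℝ → ℝ} {α a β b s ε : ℝ}

lemma integral_mul_increment_le (hF : MemPsi F) (hFα : Interpolates F α a) (hQ : MemPsi Q)
    (hH : ContinuousOn H (Icc 0 1))
    (hsub : ∀ x y, x ≤ y → Q x * (F y - F x) ≤ H (F y) - H (F x)) (hs : 0 ≤ s) :
    ∫ x, Q x * (F (x + s) - F x) ≤ s * (H a - H α) := by
  have hHF : Monotone fun x => H (F x) := fun x y hxy => sub_nonneg.1 <|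
    (mul_nonneg (hQ.2 x).1 (sub_nonneg.2 (hF.1 hxy))).trans (hsub x y hxy)
  have hlim := hF.interpolates_comp_of_continuousOn hH hFα
  rw [← integral_comp_add_sub_of_monotone hHF hlim.1 hlim.2 hs]
  exact integral_mono
    (hQ.integrable_mul (integrable_comp_add_sub_of_monotone hF.1 hFα.1 hFα.2 hs))
    (integrable_comp_add_sub_of_monotone hHF hlim.1 hlim.2 hs)
    fun x => hsub x (x + s) (le_add_of_nonneg_right hs)

lemma integral_mul_conv_increment (hω : IsEvenDensity ω) (hF : MemPsi F)
    (hFα : Interpolates F α a) (hG : MemPsi G) (hs : 0 ≤ s) :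
    ∫ x, G x * (conv F ω (x + s) - conv F ω x) = ∫ x, conv G ω x * (F (x + s) - F x) := by
  rw [hω.integral_conv_mul hG (integrable_comp_add_sub_of_monotone hF.1 hFα.1 hFα.2 hs)]
  simp only [hω.conv_comp_add_sub hF]

lemma mul_increment_le (hω : IsEvenDensity ω) (hF : MemPsi F) (hFα : Interpolates F α a)
    (hG : MemPsi G) (hGβ : Interpolates G β b) (hs : 0 ≤ s)
    (hε : ∀ x, conv F ω (x + s) - conv F ω x ≤ ε) :
    s * (b * a - β * α) ≤ (∫ x, conv G ω x * (F (x + s) - F x))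
      + (∫ x, conv F ω x * (G (x + s) - G x)) + ε * (s * (b - β)) := by
  set P := conv F ω
  have hP : MemPsi P := hω.memPsi_conv hF
  have hPα : Interpolates P α a := ⟨hω.tendsto_conv_atBot hF hFα.1, hω.tendsto_conv_atTop hF hFα.2⟩
  have hGP : Monotone fun x => G x * P x := fun x y hxy =>
    mul_le_mul (hG.1 hxy) (hP.1 hxy) (hP.2 x).1 (hG.2 y).1
  have hGPlim : Interpolates (fun x => G x * P x) (β * α) (b * a) :=
    ⟨hGβ.1.mul hPα.1, hGβ.2.mul hPα.2⟩
  have hdG := integrable_comp_add_sub_of_monotone hG.1 hGβ.1 hGβ.2 hs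
  have hdP := integrable_comp_add_sub_of_monotone hP.1 hPα.1 hPα.2 hs
  have hGdP := hG.integrable_mul hdP
  have hPdG := hP.integrable_mul hdG
  have hsum : Integrable fun x => G x * (P (x + s) - P x) + P x * (G (x + s) - G x) :=
    hGdP.add hPdG
  rw [← integral_mul_conv_increment hω hF hFα hG hs,
    ← integral_comp_add_sub_of_monotone hGP hGPlim.1 hGPlim.2 hs,
    ← integral_comp_add_sub_of_monotone hG.1 hGβ.1 hGβ.2 hs, ← integral_const_mul,
    ← integral_add hGdP hPdG, ← integral_add hsum (hdG.const_mul ε)]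
  refine integral_mono (integrable_comp_add_sub_of_monotone hGP hGPlim.1 hGPlim.2 hs)
    (hsum.add (hdG.const_mul ε)) fun x => ?_
  have hcross := mul_le_mul_of_nonneg_right (hε x)
    (sub_nonneg.2 (hG.1 (le_add_of_nonneg_right hs : x ≤ x + s)))
  beta_reduce
  linarith

-- Testing the translation `x ↦ x + s` against the subgradient inequalities as `s → 0`.
lemma coupledPotential_le_of_subgradient (hω : IsEvenDensity ω) (hF : MemPsi F)
    (hFα : Interpolates F α a) (hG : MemPsi G) (hGβ : Interpolates G β b)
    (hHf : ContinuousOn Hf (Icc 0 1)) (hHg : ContinuousOn Hg (Icc 0 1))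
    (hsubF : ∀ x y, x ≤ y → conv G ω x * (F y - F x) ≤ Hf (F y) - Hf (F x))
    (hsubG : ∀ x y, x ≤ y → conv F ω x * (G y - G x) ≤ Hg (G y) - Hg (G x)) :
    coupledPotential Hf Hg β α ≤ coupledPotential Hf Hg b a := by
  have hbβ : b - β ≤ 1 := by
    linarith [(hG.limit_mem_Icc hGβ.1).1, (hG.limit_mem_Icc hGβ.2).2]
  refine le_of_forall_pos_le_add fun ε hε => ?_
  obtain ⟨s, hs, hsmall⟩ := hω.exists_pos_forall_conv_add_sub_le hε
  have hprod := mul_increment_le hω hF hFα hG hGβ hs.le (hsmall F hF)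
  have hincF := integral_mul_increment_le hF hFα (hω.memPsi_conv hG) hHf hsubF hs.le
  have hincG := integral_mul_increment_le hG hGβ (hω.memPsi_conv hF) hHg hsubG hs.le
  have hdivided : b * a - β * α ≤ (Hf a - Hf α) + (Hg b - Hg β) + ε * (b - β) := by
    refine le_of_mul_le_mul_left (hprod.trans ?_) hs
    linarith
  unfold coupledPotential
  nlinarith

end Energy

/-! ### Tilted minimisers -/

/-- `(b, a)` minimises the tilted potential `Φ(u, v) + δ (u + v)` over the box `[0, b] × [0, a]`.
For `δ > 0` the tilt makes the coupled update robust near such a point, see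
`IsTiltedMin.le_apply`. -/
structure IsTiltedMin (Hf Hg : ℝ → ℝ) (δ b a : ℝ) : Prop where
  fst_mem : b ∈ Icc (0 : ℝ) 1
  snd_mem : a ∈ Icc (0 : ℝ) 1
  le : ∀ u ∈ Icc 0 b, ∀ v ∈ Icc 0 a,
    coupledPotential Hf Hg b a + δ * (b + a) ≤ coupledPotential Hf Hg u v + δ * (u + v)

namespace IsTiltedMin

variable {Hf Hg : ℝ → ℝ} {δ b a : ℝ}

lemma swap (h : IsTiltedMin Hf Hg δ b a) : IsTiltedMin Hg Hf δ a b :=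
  ⟨h.snd_mem, h.fst_mem, fun u hu v hv => by
    simpa only [coupledPotential_swap Hg, add_comm u, add_comm a] using h.le v hv u hu⟩

lemma le_apply (h : IsTiltedMin Hf Hg δ b a) {hg : ℝ → ℝ} (hhg : MemX hg)
    (hHg : IsInversePrimitive hg Hg) {q : ℝ} (hq : q ∈ Icc (0 : ℝ) 1) (haq : a - δ < q) :
    b ≤ hg q := by
  by_contra! hlt
  have hslope := hHg.mul_le_sub hq (hhg.2 hq).1 hlt.le h.fst_mem.2 le_rfl
  have htilt := h.le (hg q) ⟨(hhg.2 hq).1, hlt.le⟩ a (right_mem_Icc.2 h.snd_mem.1)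
  unfold coupledPotential at htilt
  nlinarith

lemma eq_of_coupledPotential_le (h : IsTiltedMin Hf Hg δ b a) (hδ : 0 < δ) {u v : ℝ}
    (hu : u ∈ Icc 0 b) (hv : v ∈ Icc 0 a)
    (hle : coupledPotential Hf Hg u v ≤ coupledPotential Hf Hg b a) : u = b ∧ v = a := by
  have hsum : b + a ≤ u + v := le_of_mul_le_mul_left (by linarith [h.le u hu v hv]) hδ
  exact ⟨le_antisymm hu.2 (by linarith [hv.2]), le_antisymm hv.2 (by linarith [hu.2])⟩

end IsTiltedMin

/-- `(u', v')` is the only point of the box `[0, u'] × [0, v']` at which `Φ` is at most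
`Φ(u', v')`. -/
structure IsStrictCornerMin (Hf Hg : ℝ → ℝ) (u' v' : ℝ) : Prop where
  fst_mem : u' ∈ Icc (0 : ℝ) 1
  snd_mem : v' ∈ Icc (0 : ℝ) 1
  eq_of_le : ∀ u ∈ Icc 0 u', ∀ v ∈ Icc 0 v',
    coupledPotential Hf Hg u v ≤ coupledPotential Hf Hg u' v' → u = u' ∧ v = v'

lemma exists_isTiltedMin_corner {Hf Hg : ℝ → ℝ} (hHf : ContinuousOn Hf (Icc 0 1))
    (hHg : ContinuousOn Hg (Icc 0 1)) (δ : ℝ) {u₁ v₁ : ℝ} (hu₁ : u₁ ∈ Icc (0 : ℝ) 1)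
    (hv₁ : v₁ ∈ Icc (0 : ℝ) 1) :
    ∃ b ∈ Icc 0 u₁, ∃ a ∈ Icc 0 v₁, IsTiltedMin Hf Hg δ b a ∧
      coupledPotential Hf Hg b a + δ * (b + a) ≤ coupledPotential Hf Hg u₁ v₁ + δ * (u₁ + v₁) := by
  have hcorner : (u₁, v₁) ∈ Icc 0 u₁ ×ˢ Icc 0 v₁ :=
    ⟨right_mem_Icc.2 hu₁.1, right_mem_Icc.2 hv₁.1⟩
  have hcont : ContinuousOn (fun p : ℝ × ℝ => coupledPotential Hf Hg p.1 p.2 + δ * (p.1 + p.2))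
      (Icc 0 u₁ ×ˢ Icc 0 v₁) :=
    ((continuousOn_coupledPotential hHf hHg).mono
      (prod_mono (Icc_subset_Icc_right hu₁.2) (Icc_subset_Icc_right hv₁.2))).add (by fun_prop)
  obtain ⟨⟨b, a⟩, ⟨hb, ha⟩, hmin⟩ :=
    (isCompact_Icc.prod isCompact_Icc).exists_isMinOn ⟨_, hcorner⟩ hcont
  exact ⟨b, hb, a, ha, ⟨⟨hb.1, hb.2.trans hu₁.2⟩, ⟨ha.1, ha.2.trans hv₁.2⟩, fun u hu v hv =>
    isMinOn_iff.1 hmin (u, v) ⟨⟨hu.1, hu.2.trans hb.2⟩, ⟨hv.1, hv.2.trans ha.2⟩⟩⟩, hmin hcorner⟩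

namespace IsStrictCornerMin

variable {Hf Hg : ℝ → ℝ} {u' v' : ℝ}

lemma exists_gap (h : IsStrictCornerMin Hf Hg u' v') (hHf : ContinuousOn Hf (Icc 0 1))
    (hHg : ContinuousOn Hg (Icc 0 1)) {η : ℝ} (hη : 0 < η) :
    ∃ γ > 0, ∀ u ∈ Icc 0 u', ∀ v ∈ Icc 0 v',
      coupledPotential Hf Hg u v < coupledPotential Hf Hg u' v' + γ → u' - η < u ∧ v' - η < v := by
  have hnear : IsOpen (Ioi (u' - η) ×ˢ Ioi (v' - η)) := isOpen_Ioi.prod isOpen_Ioi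
  have hfar : IsCompact ((Icc 0 u' ×ˢ Icc 0 v') \ (Ioi (u' - η) ×ˢ Ioi (v' - η))) :=
    (isCompact_Icc.prod isCompact_Icc).diff hnear
  have hbox : Icc 0 u' ×ˢ Icc 0 v' ⊆ Icc (0 : ℝ) 1 ×ˢ Icc (0 : ℝ) 1 :=
    prod_mono (Icc_subset_Icc_right h.fst_mem.2) (Icc_subset_Icc_right h.snd_mem.2)
  obtain ⟨c, hc, hle⟩ := hfar.exists_forall_le'
    ((continuousOn_coupledPotential hHf hHg).mono (sdiff_subset.trans hbox))
    (a := coupledPotential Hf Hg u' v') fun p ⟨hp, hpfar⟩ => lt_of_not_ge fun hple => by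
      obtain ⟨hu, hv⟩ := h.eq_of_le p.1 hp.1 p.2 hp.2 hple
      exact hpfar ⟨hu ▸ sub_lt_self u' hη, hv ▸ sub_lt_self v' hη⟩
  refine ⟨_, sub_pos.2 hc, fun u hu v hv hlt => ?_⟩
  by_contra hnot
  linarith [hle (u, v) ⟨⟨hu, hv⟩, hnot⟩]

-- Shrinking the box slightly keeps the minimiser close to `(u', v')` and forces `a < v'`.
lemma exists_isTiltedMin (h : IsStrictCornerMin Hf Hg u' v') (hHf : ContinuousOn Hf (Icc 0 1))
    (hHg : ContinuousOn Hg (Icc 0 1)) (hmono : MonotoneOn Hf (Icc 0 1)) (hv' : 0 < v') {η : ℝ}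
    (hη : 0 < η) :
    ∃ δ > 0, ∃ b a, IsTiltedMin Hf Hg δ b a ∧ u' - η < b ∧ v' - η < a ∧ a < v' := by
  obtain ⟨γ, hγ, hnear⟩ := h.exists_gap hHf hHg hη
  set ε := min v' (γ / 4)
  have hε : 0 < ε := lt_min hv' (by linarith)
  have hεv : ε ≤ v' := min_le_left _ _
  have hεγ : ε ≤ γ / 4 := min_le_right _ _
  have hcorner : v' - ε ∈ Icc (0 : ℝ) 1 := ⟨sub_nonneg.2 hεv, by linarith [h.snd_mem.2]⟩
  obtain ⟨b, hb, a, ha, hmin, hle⟩ :=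
    exists_isTiltedMin_corner hHf hHg (γ / 4) h.fst_mem hcorner
  have hclose : coupledPotential Hf Hg u' (v' - ε) ≤ coupledPotential Hf Hg u' v' + ε := by
    have := hmono hcorner h.snd_mem (sub_le_self v' hε.le)
    unfold coupledPotential
    nlinarith [h.fst_mem.2]
  have hav : a < v' := by linarith [ha.2]
  obtain ⟨hbη, haη⟩ := hnear b hb a ⟨ha.1, hav.le⟩ (by
    nlinarith [h.fst_mem.2, h.snd_mem.2, hb.1, ha.1])
  exact ⟨γ / 4, by linarith, b, a, hmin, hbη, haη, hav⟩

end IsStrictCornerMin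

/-! ### The pinned iteration -/

/-- The half-step `h ∘ (F ⊗ ω)` of the coupled recursion. -/
def update (ω h F : ℝ → ℝ) (x : ℝ) : ℝ := h (conv F ω x)

/-- The map `h` capped at the level `c`. -/
def truncate (c : ℝ) (h : ℝ → ℝ) (q : ℝ) : ℝ := min c (h q)

lemma MemX.truncate {h : ℝ → ℝ} (hh : MemX h) {c : ℝ} (hc : c ∈ Icc (0 : ℝ) 1) :
    MemX (truncate c h) :=
  ⟨fun _ hp _ hq hpq => min_le_min_left c (hh.1 hp hq hpq),
    fun _ hq => ⟨le_min hc.1 (hh.2 hq).1, (min_le_left _ _).trans hc.2⟩⟩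

lemma IsInversePrimitive.mul_le_sub_of_truncate_le {h H : ℝ → ℝ} (hH : IsInversePrimitive h H)
    {c q v w : ℝ} (hq : q ∈ Icc (0 : ℝ) 1) (hv : 0 ≤ v) (hvw : v ≤ w) (hwc : w ≤ c) (hc : c ≤ 1)
    (hle : truncate c h q ≤ v) : q * (w - v) ≤ H w - H v := by
  rcases min_le_iff.1 hle with hcv | hqv
  · simp only [le_antisymm (hwc.trans hcv) hvw, sub_self, mul_zero, le_refl]
  · exact hH.mul_le_sub hq hv hvw (hwc.trans hc) hqv

section Update

variable {ω h F G : ℝ → ℝ}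

lemma memPsi_update (hω : IsEvenDensity ω) (hh : MemX h) (hF : MemPsi F) :
    MemPsi (update ω h F) :=
  have hconv := hω.memPsi_conv hF
  ⟨fun x y hxy => hh.1 (hconv.2 x) (hconv.2 y) (hconv.1 hxy), fun x => hh.2 (hconv.2 x)⟩

lemma update_le_update (hω : IsEvenDensity ω) (hh : MemX h) (hF : MemPsi F) (hG : MemPsi G)
    (hFG : F ≤ G) : update ω h F ≤ update ω h G := fun x =>
  hh.1 ((hω.memPsi_conv hF).2 x) ((hω.memPsi_conv hG).2 x) (hω.conv_le_conv hF hG hFG x)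

lemma update_comp_sub_const (ω h F : ℝ → ℝ) (y x : ℝ) :
    update ω h (fun z => F (z - y)) x = update ω h F (x - y) :=
  congrArg h (conv_comp_sub_const F ω y x)

lemma update_truncate_comp_sub_le (hω : IsEvenDensity ω) (hh : MemX h) (hF : MemPsi F)
    (hG : MemPsi G) {y : ℝ} (hFG : ∀ x, F (x - y) ≤ G x) (c x : ℝ) :
    update ω (truncate c h) F (x - y) ≤ update ω h G x := by
  rw [← update_comp_sub_const]
  exact (min_le_right _ _).trans (update_le_update hω hh (hF.comp_sub_const y) hG hFG x)

lemma conv_mul_sub_le_of_update_truncate_le {H : ℝ → ℝ} {A : ℕ → ℝ → ℝ} {c : ℝ}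
    (hω : IsEvenDensity ω) (hH : IsInversePrimitive h H) (hA : ∀ n, MemPsi (A n))
    (hAF : ∀ x, Tendsto (fun n => A n x) atTop (𝓝 (F x))) (hG : MemPsi G) (hGc : ∀ x, G x ≤ c)
    (hc : c ≤ 1) (hle : ∀ n x, update ω (truncate c h) (A n) x ≤ G x) {x y : ℝ} (hxy : x ≤ y) :
    conv F ω x * (G y - G x) ≤ H (G y) - H (G x) :=
  le_of_tendsto' ((hω.tendsto_conv_of_forall_tendsto hA hAF x).mul_const (G y - G x)) fun n =>
    hH.mul_le_sub_of_truncate_le ((hω.memPsi_conv (hA n)).2 x) (hG.2 x).1 (hG.1 hxy) (hGc y) hc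
      (hle n x)

end Update

/-- The coupled recursion with both maps capped at the levels `b`, `a`, started from the step of
height `a` and kept above it; the pinning makes it increasing in `n`. -/
def pinnedIter (ω hf hg : ℝ → ℝ) (b a : ℝ) : ℕ → ℝ → ℝ
  | 0 => stepProfile a
  | n + 1 => stepProfile a ⊔
      update ω (truncate a hf) (update ω (truncate b hg) (pinnedIter ω hf hg b a n))

section PinnedIter

variable {ω hf hg Hf Hg : ℝ → ℝ} {b a δ : ℝ}

lemma stepProfile_le_pinnedIter (ω hf hg : ℝ → ℝ) (b a : ℝ) :
    ∀ n, stepProfile a ≤ pinnedIter ω hf hg b a n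
  | 0 => le_rfl
  | _ + 1 => le_sup_left

lemma pinnedIter_le (ω hf hg : ℝ → ℝ) (b : ℝ) (ha : 0 ≤ a) :
    ∀ n x, pinnedIter ω hf hg b a n x ≤ a
  | 0, x => stepProfile_le ha x
  | _ + 1, x => max_le (stepProfile_le ha x) (min_le_left _ _)

lemma memPsi_pinnedIter (hω : IsEvenDensity ω) (hhf : MemX hf) (hhg : MemX hg)
    (hb : b ∈ Icc (0 : ℝ) 1) (ha : a ∈ Icc (0 : ℝ) 1) : ∀ n, MemPsi (pinnedIter ω hf hg b a n)
  | 0 => memPsi_stepProfile ha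
  | n + 1 =>
    have hstep := memPsi_stepProfile ha
    have hnext := memPsi_update hω (hhf.truncate ha)
      (memPsi_update hω (hhg.truncate hb) (memPsi_pinnedIter hω hhf hhg hb ha n))
    ⟨hstep.1.sup hnext.1, fun x =>
      ⟨le_sup_of_le_left (hstep.2 x).1, sup_le (hstep.2 x).2 (hnext.2 x).2⟩⟩

lemma monotone_pinnedIter (hω : IsEvenDensity ω) (hhf : MemX hf) (hhg : MemX hg)
    (hb : b ∈ Icc (0 : ℝ) 1) (ha : a ∈ Icc (0 : ℝ) 1) : Monotone (pinnedIter ω hf hg b a) := by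
  have hpsi := memPsi_pinnedIter hω hhf hhg hb ha
  refine monotone_nat_of_le_succ fun n => ?_
  induction n with
  | zero => exact stepProfile_le_pinnedIter ω hf hg b a 1
  | succ n ih =>
    exact sup_le_sup_left (update_le_update hω (hhf.truncate ha)
      (memPsi_update hω (hhg.truncate hb) (hpsi n))
      (memPsi_update hω (hhg.truncate hb) (hpsi (n + 1)))
      (update_le_update hω (hhg.truncate hb) (hpsi n) (hpsi (n + 1)) ih)) _

lemma IsTiltedMin.tendsto_atTop_of_update_truncate_le {F G : ℝ → ℝ} (hω : IsEvenDensity ω)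
    (hhg : MemX hg) (hHg : IsInversePrimitive hg Hg) (hmin : IsTiltedMin Hf Hg δ b a) (hδ : 0 < δ)
    (hF : MemPsi F) (hFa : Tendsto F atTop (𝓝 a)) (hGb : ∀ x, G x ≤ b)
    (hle : ∀ x, update ω (truncate b hg) F x ≤ G x) : Tendsto G atTop (𝓝 b) := by
  have hlarge := (hω.tendsto_conv_atTop hF hFa).eventually_const_lt (sub_lt_self a hδ)
  refine tendsto_const_nhds.congr' (hlarge.mono fun x hx => le_antisymm ?_ (hGb x))
  exact (le_min le_rfl (hmin.le_apply hhg hHg ((hω.memPsi_conv hF).2 x) hx)).trans (hle x)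

lemma IsTiltedMin.eq_of_subgradient {F G : ℝ → ℝ} (hω : IsEvenDensity ω)
    (hmin : IsTiltedMin Hf Hg δ b a) (hδ : 0 < δ)
    (hF : MemPsi F) (hFa : ∀ x, F x ≤ a) (hFtop : Tendsto F atTop (𝓝 a))
    (hG : MemPsi G) (hGb : ∀ x, G x ≤ b) (hGtop : Tendsto G atTop (𝓝 b))
    (hHf : ContinuousOn Hf (Icc 0 1)) (hHg : ContinuousOn Hg (Icc 0 1))
    (hsubF : ∀ x y, x ≤ y → conv G ω x * (F y - F x) ≤ Hf (F y) - Hf (F x))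
    (hsubG : ∀ x y, x ≤ y → conv F ω x * (G y - G x) ≤ Hg (G y) - Hg (G x)) (x : ℝ) :
    F x = a ∧ G x = b := by
  obtain ⟨α, hαF, hFbot⟩ := hF.exists_tendsto_atBot
  obtain ⟨β, hβG, hGbot⟩ := hG.exists_tendsto_atBot
  obtain ⟨rfl, rfl⟩ := hmin.eq_of_coupledPotential_le hδ
    ⟨(hG.limit_mem_Icc hGbot).1, (hβG x).trans (hGb x)⟩
    ⟨(hF.limit_mem_Icc hFbot).1, (hαF x).trans (hFa x)⟩
    (coupledPotential_le_of_subgradient hω hF ⟨hFbot, hFtop⟩ hG ⟨hGbot, hGtop⟩ hHf hHg hsubF hsubG)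
  exact ⟨le_antisymm (hFa x) (hαF x), le_antisymm (hGb x) (hβG x)⟩

lemma IsTiltedMin.tendsto_pinnedIter (hω : IsEvenDensity ω) (hhf : MemX hf) (hhg : MemX hg)
    (hHf : IsInversePrimitive hf Hf) (hHg : IsInversePrimitive hg Hg)
    (hmin : IsTiltedMin Hf Hg δ b a) (hδ : 0 < δ) (x : ℝ) :
    Tendsto (fun n => pinnedIter ω hf hg b a n x) atTop (𝓝 a) ∧
      Tendsto (fun n => update ω (truncate b hg) (pinnedIter ω hf hg b a n) x) atTop (𝓝 b) := by
  have ha := hmin.snd_mem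
  have hb := hmin.fst_mem
  have hA := memPsi_pinnedIter hω hhf hhg hb ha
  have hAmono := monotone_pinnedIter hω hhf hhg hb ha
  set A := pinnedIter ω hf hg b a
  set B : ℕ → ℝ → ℝ := fun n => update ω (truncate b hg) (A n)
  have hB : ∀ n, MemPsi (B n) := fun n => memPsi_update hω (hhg.truncate hb) (hA n)
  have hBmono : Monotone B := fun m n hmn =>
    update_le_update hω (hhg.truncate hb) (hA m) (hA n) (hAmono hmn)
  obtain ⟨F, hF, hAF, hFlim⟩ := exists_limit_of_monotone_memPsi hA hAmono
  obtain ⟨G, hG, hBG, hGlim⟩ := exists_limit_of_monotone_memPsi hB hBmono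
  have hFa : ∀ x, F x ≤ a := fun x =>
    le_of_tendsto' (hFlim x) fun n => pinnedIter_le _ _ _ _ ha.1 n x
  have hGb : ∀ x, G x ≤ b := fun x => le_of_tendsto' (hGlim x) fun n => min_le_left _ _
  have hFtop : Tendsto F atTop (𝓝 a) :=
    tendsto_of_tendsto_of_tendsto_of_le_of_le (tendsto_stepProfile_atTop a) tendsto_const_nhds
      (hAF 0) hFa
  have hGtop : Tendsto G atTop (𝓝 b) :=
    hmin.tendsto_atTop_of_update_truncate_le hω hhg hHg hδ (hA 0) (tendsto_stepProfile_atTop a)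
      hGb (hBG 0)
  obtain ⟨hFx, hGx⟩ := hmin.eq_of_subgradient hω hδ hF hFa hFtop hG hGb hGtop
    hHf.continuousOn hHg.continuousOn
    (fun _ _ => conv_mul_sub_le_of_update_truncate_le hω hHf hB hGlim hF hFa ha.2
      fun n x => le_sup_right.trans (hAF (n + 1) x))
    (fun _ _ => conv_mul_sub_le_of_update_truncate_le hω hHg hA hFlim hG hGb hb.2 hBG) x
  simpa only [hFx, hGx] using And.intro (hFlim x) (hGlim x)

end PinnedIter

/-! ### The coupled recursion -/

/-- The spatially coupled recursion `g t = hg ∘ (f t ⊗ ω)`, `f (t + 1) = hf ∘ (g t ⊗ ω)` started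
from a profile `f 0 ∈ Ψ`. -/
structure IsCoupledRecursion (ω hf hg : ℝ → ℝ) (f g : ℕ → ℝ → ℝ) : Prop where
  memPsi_zero : MemPsi (f 0)
  right_eq : ∀ t, g t = update ω hg (f t)
  left_succ : ∀ t, f (t + 1) = update ω hf (g t)

lemma update_reflect {ω F : ℝ → ℝ} (hω : IsEvenDensity ω) (h : ℝ → ℝ) (hF : MemPsi F) :
    update ω (reflect h) (fun y => 1 - F (-y)) = fun x => 1 - update ω h F (-x) := by
  ext x
  rw [update, hω.conv_one_sub_comp_neg hF, reflect, sub_sub_cancel, update]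

lemma IsTiltedMin.exists_pos_forall_le_update_update {ω hf hg Hf Hg : ℝ → ℝ} {δ b a : ℝ}
    (hω : IsEvenDensity ω) (hhf : MemX hf) (hhg : MemX hg) (hHf : IsInversePrimitive hf Hf)
    (hHg : IsInversePrimitive hg Hg) (hmin : IsTiltedMin Hf Hg δ b a) (hδ : 0 < δ) :
    ∃ s, 0 < s ∧ ∀ F, MemPsi F → ∀ y, (∀ x, y ≤ x → a - δ / 3 ≤ F x) →
      ∀ x, y + s ≤ x → a ≤ update ω hf (update ω hg F) x := by
  obtain ⟨r, hr, hconv⟩ := hω.exists_pos_forall_sub_le_conv (div_pos hδ three_pos)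
  refine ⟨r + r, add_pos hr hr, fun F hF y hy x hx => ?_⟩
  have hG : MemPsi (update ω hg F) := memPsi_update hω hhg hF
  have hGb : ∀ z, y + r ≤ z → b ≤ update ω hg F z := fun z hz =>
    hmin.le_apply hhg hHg ((hω.memPsi_conv hF).2 z) <| by
      linarith [hconv F hF _ (by linarith [hmin.snd_mem.2]) y hy z hz]
  exact hmin.swap.le_apply hhf hHf ((hω.memPsi_conv hG).2 x) <| by
    linarith [hconv _ hG b hmin.fst_mem.2 (y + r) hGb x (by linarith)]

namespace IsCoupledRecursion

variable {ω hf hg Hf Hg : ℝ → ℝ} {f g : ℕ → ℝ → ℝ} {δ b a : ℝ}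

lemma memPsi_left (h : IsCoupledRecursion ω hf hg f g) (hω : IsEvenDensity ω) (hhf : MemX hf)
    (hhg : MemX hg) : ∀ t, MemPsi (f t)
  | 0 => h.memPsi_zero
  | t + 1 => by
    rw [h.left_succ, h.right_eq]
    exact memPsi_update hω hhf (memPsi_update hω hhg (h.memPsi_left hω hhf hhg t))

lemma memPsi_right (h : IsCoupledRecursion ω hf hg f g) (hω : IsEvenDensity ω) (hhf : MemX hf)
    (hhg : MemX hg) (t : ℕ) : MemPsi (g t) := by
  rw [h.right_eq]
  exact memPsi_update hω hhg (h.memPsi_left hω hhf hhg t)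

lemma reflect (h : IsCoupledRecursion ω hf hg f g) (hω : IsEvenDensity ω) (hhf : MemX hf)
    (hhg : MemX hg) : IsCoupledRecursion ω (reflect hf) (reflect hg)
      (fun t x => 1 - f t (-x)) (fun t x => 1 - g t (-x)) where
  memPsi_zero := h.memPsi_zero.one_sub_comp_neg
  right_eq t := by rw [update_reflect hω hg (h.memPsi_left hω hhf hhg t), h.right_eq]
  left_succ t := by rw [update_reflect hω hf (h.memPsi_right hω hhf hhg t), h.left_succ]

lemma pinnedIter_succ_comp_sub_le (h : IsCoupledRecursion ω hf hg f g) (hω : IsEvenDensity ω)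
    (hhf : MemX hf) (hhg : MemX hg) (hb : b ∈ Icc (0 : ℝ) 1) (ha : a ∈ Icc (0 : ℝ) 1) {n : ℕ}
    {Y : ℝ} (hle : ∀ x, pinnedIter ω hf hg b a n (x - Y) ≤ f n x)
    (hpin : ∀ x, Y ≤ x → a ≤ f (n + 1) x) (x : ℝ) :
    pinnedIter ω hf hg b a (n + 1) (x - Y) ≤ f (n + 1) x := by
  have hA := memPsi_pinnedIter hω hhf hhg hb ha n
  have hpsi := h.memPsi_left hω hhf hhg
  refine max_le (stepProfile_comp_sub_le (hpsi (n + 1)) hpin x) ?_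
  rw [h.left_succ, h.right_eq]
  exact update_truncate_comp_sub_le hω hhf (memPsi_update hω (hhg.truncate hb) hA)
    (memPsi_update hω hhg (hpsi n)) (update_truncate_comp_sub_le hω hhg hA (hpsi n) hle b) a x

-- The finitely many steps before the pinned iteration has filled `[-s, 0]` are paid for by
-- shifting it far to the right; afterwards it maintains the level `a` on `[Y, ∞)` by itself.
lemma exists_pinnedIter_comp_sub_le (h : IsCoupledRecursion ω hf hg f g) (hω : IsEvenDensity ω)
    (hhf : MemX hf) (hhg : MemX hg) (hHf : IsInversePrimitive hf Hf)
    (hHg : IsInversePrimitive hg Hg) (hmin : IsTiltedMin Hf Hg δ b a) (hδ : 0 < δ) {X : ℝ}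
    (hX : ∀ x, X ≤ x → a ≤ f 0 x) :
    ∃ Y, ∀ n x, pinnedIter ω hf hg b a n (x - Y) ≤ f n x := by
  have hpsi := h.memPsi_left hω hhf hhg
  obtain ⟨s, hs, hupdate⟩ := hmin.exists_pos_forall_le_update_update hω hhf hhg hHf hHg hδ
  have hstep : ∀ n y, (∀ x, y ≤ x → a - δ / 3 ≤ f n x) → ∀ x, y + s ≤ x → a ≤ f (n + 1) x := by
    intro n
    rw [h.left_succ, h.right_eq]
    exact hupdate (f n) (hpsi n)
  have hdrift : ∀ j : ℕ, ∀ x, X + s * j ≤ x → a ≤ f j x := fun j => by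
    induction j with
    | zero => simpa only [Nat.cast_zero, mul_zero, add_zero] using hX
    | succ j ih =>
      intro x hx
      push_cast at hx
      exact hstep j (X + s * j) (fun y hy => by linarith [ih y hy]) x (by linarith)
  obtain ⟨n₀, hn₀⟩ := eventually_atTop.1 <|
    (hmin.tendsto_pinnedIter hω hhf hhg hHf hHg hδ (-s)).1.eventually_const_le
      (sub_lt_self a (div_pos hδ three_pos))
  have hpin : ∀ j : ℕ, j ≤ n₀ → ∀ x, X + s * n₀ ≤ x → a ≤ f j x := fun j hj x hx =>
    hdrift j x (le_trans (by gcongr) hx)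
  refine ⟨X + s * n₀, fun n => ?_⟩
  induction n with
  | zero => exact stepProfile_comp_sub_le (hpsi 0) (hpin 0 n₀.zero_le)
  | succ n ih =>
    refine h.pinnedIter_succ_comp_sub_le hω hhf hhg hmin.fst_mem hmin.snd_mem ih ?_
    rcases le_or_gt (n + 1) n₀ with hn | hn
    · exact hpin (n + 1) hn
    refine fun z hz => hstep n (X + s * n₀ - s) (fun y hy => ?_) z (by linarith)
    have hA := memPsi_pinnedIter hω hhf hhg hmin.fst_mem hmin.snd_mem n
    exact (hn₀ n (Nat.lt_succ_iff.1 hn)).trans ((hA.1 (by linarith)).trans (ih y))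

end IsCoupledRecursion

/-! ### Convergence -/

lemma le_liminf_of_forall_eventually_sub_lt {φ : ℕ → ℝ} {B c : ℝ} (hB : ∀ t, φ t ≤ B)
    (h : ∀ η > 0, ∀ᶠ t in atTop, c - η < φ t) : c ≤ liminf φ atTop :=
  le_of_forall_sub_le fun η hη =>
    le_liminf_of_le (isBoundedUnder_of ⟨B, hB⟩).isCoboundedUnder_ge
      ((h η hη).mono fun _ => le_of_lt)

lemma limsup_le_of_forall_eventually_lt_add {φ : ℕ → ℝ} {B c : ℝ} (hB : ∀ t, B ≤ φ t)
    (h : ∀ η > 0, ∀ᶠ t in atTop, φ t < c + η) : limsup φ atTop ≤ c :=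
  le_of_forall_pos_le_add fun η hη =>
    limsup_le_of_le (isBoundedUnder_of ⟨B, hB⟩).isCoboundedUnder_le
      ((h η hη).mono fun _ => le_of_lt)

namespace IsCoupledRecursion

variable {ω hf hg Hf Hg : ℝ → ℝ} {f g : ℕ → ℝ → ℝ} {δ b a u' v' : ℝ}

lemma eventually_lt_of_isTiltedMin (h : IsCoupledRecursion ω hf hg f g) (hω : IsEvenDensity ω)
    (hhf : MemX hf) (hhg : MemX hg) (hHf : IsInversePrimitive hf Hf)
    (hHg : IsInversePrimitive hg Hg) (hmin : IsTiltedMin Hf Hg δ b a) (hδ : 0 < δ)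
    (ha : ∃ x, a < f 0 x) (x : ℝ) :
    (∀ c < a, ∀ᶠ t in atTop, c < f t x) ∧ ∀ c < b, ∀ᶠ t in atTop, c < g t x := by
  obtain ⟨X, hX⟩ := ha
  obtain ⟨Y, hle⟩ := h.exists_pinnedIter_comp_sub_le hω hhf hhg hHf hHg hmin hδ
    fun z hz => hX.le.trans (h.memPsi_zero.1 hz)
  obtain ⟨hAlim, hBlim⟩ := hmin.tendsto_pinnedIter hω hhf hhg hHf hHg hδ (x - Y)
  refine ⟨fun c hc => ?_, fun c hc => ?_⟩
  · exact (hAlim.eventually_const_lt hc).mono fun t ht => ht.trans_le (hle t x)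
  · refine (hBlim.eventually_const_lt hc).mono fun t ht => ht.trans_le ?_
    rw [h.right_eq]
    exact update_truncate_comp_sub_le hω hhg
      (memPsi_pinnedIter hω hhf hhg hmin.fst_mem hmin.snd_mem t)
      (h.memPsi_left hω hhf hhg t) (hle t) b x

lemma eventually_sub_lt (h : IsCoupledRecursion ω hf hg f g) (hω : IsEvenDensity ω)
    (hhf : MemX hf) (hhg : MemX hg) (hHf : IsInversePrimitive hf Hf)
    (hHg : IsInversePrimitive hg Hg) (hmin : IsStrictCornerMin Hf Hg u' v')
    (htop : ∀ c < v', ∃ x, c < f 0 x) (x : ℝ) {η : ℝ} (hη : 0 < η) :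
    ∀ᶠ t in atTop, v' - η < f t x ∧ u' - η < g t x := by
  rcases hmin.snd_mem.1.eq_or_lt with rfl | hv'
  · have hle : coupledPotential Hf Hg 0 0 ≤ coupledPotential Hf Hg u' 0 := by
      simpa only [coupledPotential, mul_zero, sub_zero, add_le_add_iff_right] using
        hHg.monotoneOn (left_mem_Icc.2 zero_le_one) hmin.fst_mem hmin.fst_mem.1
    have hu' : 0 = u' :=
      (hmin.eq_of_le 0 (left_mem_Icc.2 hmin.fst_mem.1) 0 (left_mem_Icc.2 le_rfl) hle).1
    refine Eventually.of_forall fun t => ?_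
    have hf0 := ((h.memPsi_left hω hhf hhg t).2 x).1
    have hg0 := ((h.memPsi_right hω hhf hhg t).2 x).1
    constructor <;> linarith
  · obtain ⟨δ, hδ, b, a, htilt, hb, ha, hav⟩ :=
      hmin.exists_isTiltedMin hHf.continuousOn hHg.continuousOn hHf.monotoneOn hv' hη
    obtain ⟨hfa, hgb⟩ :=
      h.eventually_lt_of_isTiltedMin hω hhf hhg hHf hHg htilt hδ (htop a hav) x
    exact (hfa _ ha).and (hgb _ hb)

lemma eventually_lt_add (h : IsCoupledRecursion ω hf hg f g) (hω : IsEvenDensity ω)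
    (hhf : MemX hf) (hhg : MemX hg) (hHf : IsInversePrimitive hf Hf)
    (hHg : IsInversePrimitive hg Hg)
    (hmin : IsStrictCornerMin (reflectPrimitive Hf) (reflectPrimitive Hg) (1 - u') (1 - v'))
    (hbot : ∀ c > v', ∃ x, f 0 x < c) (x : ℝ) {η : ℝ} (hη : 0 < η) :
    ∀ᶠ t in atTop, f t x < v' + η ∧ g t x < u' + η := by
  have hreflected := (h.reflect hω hhf hhg).eventually_sub_lt hω hhf.reflect hhg.reflect
    hHf.reflect hHg.reflect hmin (fun c hc => ?_) (-x) hη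
  · filter_upwards [hreflected] with t ht
    rw [neg_neg] at ht
    constructor <;> linarith [ht.1, ht.2]
  · obtain ⟨y, hy⟩ := hbot (1 - c) (lt_sub_comm.1 hc)
    exact ⟨-y, by rw [neg_neg]; linarith⟩

end IsCoupledRecursion

section Minimisers

variable {hf hg : ℝ → ℝ} {m u' v' : ℝ}

lemma isStrictCornerMin_of_least (hhf : MemX hf) (hhg : MemX hg)
    (hm : IsLeast ((fun p : ℝ × ℝ => Pot hf hg p.1 p.2) '' (Icc 0 1 ×ˢ Icc 0 1)) m)
    (hmin : IsCrossing hf hg u' v' ∧ Pot hf hg u' v' = m ∧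
      ∀ u v, IsCrossing hf hg u v → Pot hf hg u v = m → u' ≤ u ∧ v' ≤ v) :
    IsStrictCornerMin (inversePrimitive hf) (inversePrimitive hg) u' v' := by
  obtain ⟨⟨hu', hv', -⟩, rfl, hleast⟩ := hmin
  refine ⟨hu', hv', fun u hu v hv hle => ?_⟩
  obtain ⟨hcross, heq⟩ := isCrossing_of_Pot_le_isLeast hhf hhg hm ⟨hu.1, hu.2.trans hu'.2⟩
    ⟨hv.1, hv.2.trans hv'.2⟩ hle
  exact (hleast u v hcross heq).imp (le_antisymm hu.2) (le_antisymm hv.2)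

lemma isStrictCornerMin_reflect_of_greatest (hhf : MemX hf) (hhg : MemX hg)
    (hm : IsLeast ((fun p : ℝ × ℝ => Pot hf hg p.1 p.2) '' (Icc 0 1 ×ˢ Icc 0 1)) m)
    (hmax : IsCrossing hf hg u' v' ∧ Pot hf hg u' v' = m ∧
      ∀ u v, IsCrossing hf hg u v → Pot hf hg u v = m → u ≤ u' ∧ v ≤ v') :
    IsStrictCornerMin (reflectPrimitive (inversePrimitive hf))
      (reflectPrimitive (inversePrimitive hg)) (1 - u') (1 - v') := by
  obtain ⟨⟨hu', hv', -⟩, rfl, hgreatest⟩ := hmax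
  refine ⟨Icc.mem_iff_one_sub_mem.1 hu', Icc.mem_iff_one_sub_mem.1 hv', fun u hu v hv hle => ?_⟩
  rw [coupledPotential_reflect, coupledPotential_reflect,
    add_le_add_iff_right, sub_sub_cancel, sub_sub_cancel] at hle
  obtain ⟨hcross, heq⟩ := isCrossing_of_Pot_le_isLeast hhf hhg hm
    (Icc.mem_iff_one_sub_mem.1 ⟨hu.1, by linarith [hu.2, hu'.1]⟩)
    (Icc.mem_iff_one_sub_mem.1 ⟨hv.1, by linarith [hv.2, hv'.1]⟩) hle
  obtain ⟨hu1, hv1⟩ := hgreatest _ _ hcross heq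
  constructor <;> linarith [hu.2, hv.2]

end Minimisers

theorem general_continuum_convergence_general
    {ω hf hg : ℝ → ℝ} (hω : IsEvenDensity ω) (hhf : MemX hf) (hhg : MemX hg) {m : ℝ}
    (hm : IsLeast ((fun p : ℝ × ℝ => Pot hf hg p.1 p.2) '' (Icc 0 1 ×ˢ Icc 0 1)) m)
    {u' v' u'' v'' : ℝ}
    (hmin : IsCrossing hf hg u' v' ∧ Pot hf hg u' v' = m ∧
      ∀ u v, IsCrossing hf hg u v → Pot hf hg u v = m → u' ≤ u ∧ v' ≤ v)
    (hmax : IsCrossing hf hg u'' v'' ∧ Pot hf hg u'' v'' = m ∧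
      ∀ u v, IsCrossing hf hg u v → Pot hf hg u v = m → u ≤ u'' ∧ v ≤ v'')
    {f g : ℕ → ℝ → ℝ} (hrec : IsCoupledRecursion ω hf hg f g)
    (hbot : sInf (range (f 0)) ≤ v'') (htop : v' ≤ sSup (range (f 0))) (x : ℝ) :
    v' ≤ liminf (fun t => f t x) atTop ∧ u' ≤ liminf (fun t => g t x) atTop ∧
      limsup (fun t => f t x) atTop ≤ v'' ∧ limsup (fun t => g t x) atTop ≤ u'' := by
  have hfI := fun t => (hrec.memPsi_left hω hhf hhg t).2 x
  have hgI := fun t => (hrec.memPsi_right hω hhf hhg t).2 x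
  have hlower := fun η (hη : 0 < η) => hrec.eventually_sub_lt hω hhf hhg hhf.isInversePrimitive
    hhg.isInversePrimitive (isStrictCornerMin_of_least hhf hhg hm hmin)
    (fun c hc => exists_range_iff.1 (exists_lt_of_lt_csSup (range_nonempty _) (hc.trans_le htop)))
    x hη
  have hupper := fun η (hη : 0 < η) => hrec.eventually_lt_add hω hhf hhg hhf.isInversePrimitive
    hhg.isInversePrimitive (isStrictCornerMin_reflect_of_greatest hhf hhg hm hmax)
    (fun c hc => exists_range_iff.1 (exists_lt_of_csInf_lt (range_nonempty _) (hbot.trans_lt hc)))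
    x hη
  refine ⟨le_liminf_of_forall_eventually_sub_lt (fun t => (hfI t).2) ?_,
    le_liminf_of_forall_eventually_sub_lt (fun t => (hgI t).2) ?_,
    limsup_le_of_forall_eventually_lt_add (fun t => (hfI t).1) ?_,
    limsup_le_of_forall_eventually_lt_add (fun t => (hgI t).1) ?_⟩
  · exact fun η hη => (hlower η hη).mono fun _ => And.left
  · exact fun η hη => (hlower η hη).mono fun _ => And.right
  · exact fun η hη => (hupper η hη).mono fun _ => And.left
  · exact fun η hη => (hupper η hη).mono fun _ => And.right

/-- **General continuum convergence.** Here `m` is the (attained) minimum of the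
potential over `[0,1]²`, and `(u′,v′)`, `(u″,v″)` are the componentwise smallest and
largest crossing points realizing this minimum. -/
theorem general_continuum_convergence
    (ω hf hg : ℝ → ℝ)
    (hω : IsAveragingKernel ω) (hreg : IsRegularKernel ω)
    (hhf : MemX hf) (hhg : MemX hg)
    (m : ℝ)
    (hm : IsLeast ((fun p : ℝ × ℝ => Pot hf hg p.1 p.2) '' (Icc 0 1 ×ˢ Icc 0 1)) m)
    (u' v' u'' v'' : ℝ)
    (hmin : IsCrossing hf hg u' v' ∧ Pot hf hg u' v' = m ∧
      ∀ u v, IsCrossing hf hg u v → Pot hf hg u v = m → u' ≤ u ∧ v' ≤ v)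
    (hmax : IsCrossing hf hg u'' v'' ∧ Pot hf hg u'' v'' = m ∧
      ∀ u v, IsCrossing hf hg u v → Pot hf hg u v = m → u ≤ u'' ∧ v ≤ v'')
    (f g : ℕ → ℝ → ℝ)
    (hf0 : MemPsi (f 0))
    (hbot : sInf (Set.range (f 0)) ≤ v'') (htop : v' ≤ sSup (Set.range (f 0)))
    (hrecg : ∀ t x, g t x = hg (conv (f t) ω x))
    (hrecf : ∀ t x, f (t + 1) x = hf (conv (g t) ω x)) :
    ∀ x : ℝ,
      v' ≤ Filter.liminf (fun t => f t x) Filter.atTop ∧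
      u' ≤ Filter.liminf (fun t => g t x) Filter.atTop ∧
      Filter.limsup (fun t => f t x) Filter.atTop ≤ v'' ∧
      Filter.limsup (fun t => g t x) Filter.atTop ≤ u'' :=
  general_continuum_convergence_general hω.isEvenDensity hhf hhg hm hmin hmax
    ⟨hf0, fun t => funext (hrecg t), fun t => funext (hrecf t)⟩ hbot htop
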